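/- Let ρ>0, ρ̃>0 with ρ≠ρ̃, G>0, P₀>0 and k̂₀∈ℝ with N := k̂₀(ρ−ρ̃) − ρ < 0; set P(t) := √(P₀² − 2G·P₀·N·t + ρρ̃G²t²), k̂(t) := (ρ − P′(t)/G)/(ρ−ρ̃) and ϰ := √ρ/(√ρ + √ρ̃). Then for every x₀, u ∈ ℝ, the function x(t) := x₀ + u·∫₀ᵗ k̂(τ)dτ satisfies (x(t) − x₀ − ϰ·u·t)/t → 0 as t → +∞; equivalently, (1/t)∫₀ᵗ k̂(τ)dτ → ϰ. -/

import Mathlib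

/-- `Q(t) = P₀² − 2GP₀Nt + ρρ̃G²t²`, the square of the shock mass (formula (34)). -/
noncomputable def Qf (ρ ρt G P₀ N t : ℝ) : ℝ :=
  P₀ ^ 2 - 2 * G * P₀ * N * t + ρ * ρt * G ^ 2 * t ^ 2

/-- `P(t) = √Q(t)`, the shock mass (formula (34)). -/
noncomputable def Pf (ρ ρt G P₀ N : ℝ) : ℝ → ℝ :=
  fun t => Real.sqrt (Qf ρ ρt G P₀ N t)

/-- `k̂(t) = (ρ − P′(t)/G)/(ρ − ρ̃)`, the normalized momentum coefficient. -/
noncomputable def khatf (ρ ρt G P₀ N : ℝ) : ℝ → ℝ :=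
  fun t => (ρ - deriv (Pf ρ ρt G P₀ N) t / G) / (ρ - ρt)

/-!
The integrand `k̂` is the derivative of `K(t) = (ρ·t − P(t)/G)/(ρ − ρ̃)`, so its time average has
the same limit as `K(t)/t`. Since `P` is the square root of a quadratic with leading coefficient
`ρρ̃G²`, `P(t)/t → √ρ√ρ̃G`, and therefore `K(t)/t → (ρ − √ρ√ρ̃)/(ρ − ρ̃) = √ρ/(√ρ + √ρ̃)`.
-/

open Filter Set Topology

theorem tendsto_inv_smul_integral_deriv_atTop {E : Type*} [NormedAddCommGroup E] [NormedSpace ℝ E]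
    [CompleteSpace E] {f : ℝ → E} {a : ℝ} {L : E} (hf : ContDiffOn ℝ 1 f (Ici a))
    (hL : Tendsto (fun t => t⁻¹ • f t) atTop (𝓝 L)) :
    Tendsto (fun t => t⁻¹ • ∫ τ in a..t, deriv f τ) atTop (𝓝 L) := by
  have initial_value_negligible : Tendsto (fun t : ℝ => t⁻¹ • f a) atTop (𝓝 0) := by
    simpa only [zero_smul] using (tendsto_inv_atTop_zero (𝕜 := ℝ)).smul_const (f a)
  have mean_increment : Tendsto (fun t => t⁻¹ • (f t - f a)) atTop (𝓝 L) := by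
    simpa only [smul_sub, sub_zero] using hL.sub initial_value_negligible
  refine mean_increment.congr' ?_
  filter_upwards [eventually_ge_atTop a] with t hat
  rw [intervalIntegral.integral_deriv_of_contDiffOn_Icc (hf.mono Icc_subset_Ici_self) hat]

theorem tendsto_sqrt_quadratic_div_atTop (a b c : ℝ) :
    Tendsto (fun t => √(a * t ^ 2 + b * t + c) / t) atTop (𝓝 √a) := by
  have hinv : Tendsto (fun t : ℝ => t⁻¹) atTop (𝓝 0) := tendsto_inv_atTop_zero
  have hrescaled : Tendsto (fun t : ℝ => √(a + b * t⁻¹ + c * t⁻¹ ^ 2)) atTop (𝓝 √a) := by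
    simpa using (((hinv.const_mul b).const_add a).add ((hinv.pow 2).const_mul c)).sqrt
  refine hrescaled.congr' ?_
  filter_upwards [eventually_gt_atTop 0] with t ht
  calc √(a + b * t⁻¹ + c * t⁻¹ ^ 2)
      = √((a * t ^ 2 + b * t + c) / t ^ 2) := by congr 1; field_simp
    _ = √(a * t ^ 2 + b * t + c) / t := by rw [Real.sqrt_div' _ (sq_nonneg t), Real.sqrt_sq ht.le]

theorem tendsto_affine_sub_linear_div_atTop {I : ℝ → ℝ} {k : ℝ}
    (hI : Tendsto (fun t => I t / t) atTop (𝓝 k)) (x₀ u : ℝ) :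
    Tendsto (fun t => ((x₀ + u * I t) - x₀ - k * u * t) / t) atTop (𝓝 0) := by
  have hdefect : Tendsto (fun t => u * (I t / t - k)) atTop (𝓝 0) := by
    simpa using (hI.sub_const k).const_mul u
  refine hdefect.congr' ?_
  filter_upwards [eventually_ne_atTop 0] with t ht
  field_simp
  ring

theorem sub_sqrt_mul_sqrt_div_sub {x y : ℝ} (hx : 0 ≤ x) (hy : 0 ≤ y) (hne : x ≠ y) :
    (x - √x * √y) / (x - y) = √x / (√x + √y) := by
  have hdiff : √x - √y ≠ 0 := sub_ne_zero.2 fun h => hne ((Real.sqrt_inj hx hy).1 h)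
  calc (x - √x * √y) / (x - y)
      = (√x * (√x - √y)) / ((√x + √y) * (√x - √y)) := by
        congr 1
        · linear_combination -Real.sq_sqrt hx
        · linear_combination Real.sq_sqrt hy - Real.sq_sqrt hx
    _ = √x / (√x + √y) := mul_div_mul_right _ _ hdiff

/-- The primitive `K(t) = (ρ·t − P(t)/G)/(ρ − ρ̃)` of `k̂`, not normalized to vanish at `t = 0`. -/
noncomputable def khatPrimitive (ρ ρt G P₀ N : ℝ) : ℝ → ℝ :=
  fun t => (ρ * t - Pf ρ ρt G P₀ N t / G) / (ρ - ρt)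

section ShockMass

variable {ρ ρt G P₀ N t : ℝ}

theorem Qf_pos (hρ : 0 ≤ ρ) (hρt : 0 ≤ ρt) (hG : 0 < G) (hP₀ : 0 < P₀) (hN : N < √ρ * √ρt)
    (ht : 0 ≤ t) : 0 < Qf ρ ρt G P₀ N t := by
  have complete_square : Qf ρ ρt G P₀ N t =
      (P₀ - √ρ * √ρt * G * t) ^ 2 + 2 * G * P₀ * (√ρ * √ρt - N) * t := by
    have hprod : (√ρ * √ρt) ^ 2 = ρ * ρt := by rw [mul_pow, Real.sq_sqrt hρ, Real.sq_sqrt hρt]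
    unfold Qf
    linear_combination -(G ^ 2 * t ^ 2) * hprod
  have := sub_pos.2 hN
  rw [complete_square]
  rcases ht.eq_or_lt with rfl | ht
  · simpa using pow_pos hP₀ 2
  · positivity

theorem contDiffAt_Pf (hQ : Qf ρ ρt G P₀ N t ≠ 0) {n : WithTop ℕ∞} :
    ContDiffAt ℝ n (Pf ρ ρt G P₀ N) t := by
  have hsmooth : ContDiff ℝ n (Qf ρ ρt G P₀ N) := by
    unfold Qf
    fun_prop
  exact hsmooth.contDiffAt.sqrt hQ

theorem contDiffAt_khatPrimitive (hQ : Qf ρ ρt G P₀ N t ≠ 0) {n : WithTop ℕ∞} :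
    ContDiffAt ℝ n (khatPrimitive ρ ρt G P₀ N) t :=
  ((contDiffAt_const.mul contDiffAt_id).sub ((contDiffAt_Pf hQ).div_const G)).div_const (ρ - ρt)

theorem deriv_khatPrimitive (hQ : Qf ρ ρt G P₀ N t ≠ 0) :
    deriv (khatPrimitive ρ ρt G P₀ N) t = khatf ρ ρt G P₀ N t := by
  have hP : HasDerivAt (Pf ρ ρt G P₀ N) (deriv (Pf ρ ρt G P₀ N) t) t :=
    ((contDiffAt_Pf hQ).differentiableAt one_ne_zero).hasDerivAt
  have hK := (((hasDerivAt_id t).const_mul ρ).sub (hP.div_const G)).div_const (ρ - ρt)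
  rw [mul_one] at hK
  exact hK.deriv

theorem tendsto_Pf_div_atTop (hρ : 0 ≤ ρ) (hG : 0 ≤ G) :
    Tendsto (fun t => Pf ρ ρt G P₀ N t / t) atTop (𝓝 (√ρ * √ρt * G)) := by
  have leading_coeff : √(ρ * ρt * G ^ 2) = √ρ * √ρt * G := by
    rw [Real.sqrt_mul' _ (sq_nonneg G), Real.sqrt_sq hG, Real.sqrt_mul hρ]
  rw [← leading_coeff]
  refine (tendsto_sqrt_quadratic_div_atTop _ (-(2 * G * P₀ * N)) (P₀ ^ 2)).congr fun t => ?_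
  unfold Pf Qf
  ring_nf

theorem tendsto_khatPrimitive_div_atTop (hρ : 0 ≤ ρ) (hρt : 0 ≤ ρt) (hne : ρ ≠ ρt) (hG : 0 < G) :
    Tendsto (fun t => khatPrimitive ρ ρt G P₀ N t / t) atTop (𝓝 (√ρ / (√ρ + √ρt))) := by
  have hlim : Tendsto (fun t => (ρ - Pf ρ ρt G P₀ N t / t / G) / (ρ - ρt)) atTop
      (𝓝 ((ρ - √ρ * √ρt * G / G) / (ρ - ρt))) :=
    (((tendsto_Pf_div_atTop hρ hG.le).div_const G).const_sub ρ).div_const (ρ - ρt)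
  rw [mul_div_cancel_right₀ _ hG.ne', sub_sqrt_mul_sqrt_div_sub hρ hρt hne] at hlim
  refine hlim.congr' ?_
  filter_upwards [eventually_ne_atTop 0] with t ht
  unfold khatPrimitive
  field_simp

theorem tendsto_integral_khatf_div_atTop (hρ : 0 ≤ ρ) (hρt : 0 ≤ ρt) (hne : ρ ≠ ρt) (hG : 0 < G)
    (hQ : ∀ τ ∈ Ici (0 : ℝ), Qf ρ ρt G P₀ N τ ≠ 0) :
    Tendsto (fun t => (∫ τ in (0 : ℝ)..t, khatf ρ ρt G P₀ N τ) / t) atTop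
      (𝓝 (√ρ / (√ρ + √ρt))) := by
  have hK : ContDiffOn ℝ 1 (khatPrimitive ρ ρt G P₀ N) (Ici 0) := fun τ hτ =>
    (contDiffAt_khatPrimitive (hQ τ hτ)).contDiffWithinAt
  have hmean := tendsto_inv_smul_integral_deriv_atTop hK <| by
    simpa only [smul_eq_mul, inv_mul_eq_div] using tendsto_khatPrimitive_div_atTop hρ hρt hne hG
  simp only [smul_eq_mul, inv_mul_eq_div] at hmean
  refine hmean.congr' ?_
  filter_upwards [eventually_ge_atTop 0] with t ht
  congr 1
  refine intervalIntegral.integral_congr fun τ hτ => deriv_khatPrimitive (hQ τ ?_)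
  exact (uIcc_of_le ht ▸ hτ).1

end ShockMass

theorem stmt_12_general (ρ ρt G P₀ N : ℝ)
    (hρ : 0 ≤ ρ) (hρt : 0 ≤ ρt) (hne : ρ ≠ ρt) (hG : 0 < G) (hP₀ : 0 < P₀)
    (hN : N < √ρ * √ρt) (x₀ u : ℝ) :
    Tendsto
      (fun t => ((x₀ + u * ∫ τ in (0 : ℝ)..t, khatf ρ ρt G P₀ N τ) - x₀ -
        (√ρ / (√ρ + √ρt)) * u * t) / t) atTop (𝓝 0) ∧
    Tendsto (fun t => (∫ τ in (0 : ℝ)..t, khatf ρ ρt G P₀ N τ) / t) atTop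
      (𝓝 (√ρ / (√ρ + √ρt))) :=
  have hmean := tendsto_integral_khatf_div_atTop hρ hρt hne hG fun _ hτ =>
    (Qf_pos hρ hρt hG hP₀ hN hτ).ne'
  ⟨tendsto_affine_sub_linear_div_atTop hmean x₀ u, hmean⟩

/-- Conclusion of Theorem 5.1: the shock front `x(t) = x₀ + u∫₀ᵗ k̂` is asymptotic
to the straight-line front `x₀ + ϰut` with `ϰ = √ρ/(√ρ+√ρ̃)`. -/
theorem stmt_12 (ρ ρt G P₀ khat₀ N : ℝ)
    (hρ : 0 < ρ) (hρt : 0 < ρt) (hne : ρ ≠ ρt) (hG : 0 < G) (hP₀ : 0 < P₀)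
    (hN : N = khat₀ * (ρ - ρt) - ρ) (hNneg : N < 0) :
    ∀ x₀ u : ℝ,
      Filter.Tendsto
        (fun t => ((x₀ + u * ∫ τ in (0:ℝ)..t, khatf ρ ρt G P₀ N τ) - x₀ -
          (Real.sqrt ρ / (Real.sqrt ρ + Real.sqrt ρt)) * u * t) / t)
        Filter.atTop (nhds 0) ∧
      Filter.Tendsto
        (fun t => (∫ τ in (0:ℝ)..t, khatf ρ ρt G P₀ N τ) / t)
        Filter.atTop (nhds (Real.sqrt ρ / (Real.sqrt ρ + Real.sqrt ρt))) := by
  exact stmt_12_general ρ ρt G P₀ N hρ.le hρt.le hne hG hP₀ (hNneg.trans_le (by positivity))
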